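/- Fix a labelled Markov chain ⟨S, L, τ, ℓ⟩. For every robust bisimulation R ⊆ S×S, we have R ⊆ ≃; that is, every pair of states related by a robust bisimulation is robustly probabilistically bisimilar. -/

import Mathlib

open Finset Filter
open scoped Classical

/-- `μ` is a probability distribution on the finite type `X`. -/
def IsDist {X : Type*} [Fintype X] (μ : X → ℝ) : Prop :=
  (∀ x, 0 ≤ μ x) ∧ ∑ x, μ x = 1

/-- `ω` is a coupling of the distributions `μ` and `ν`. -/
def IsCoupling {X : Type*} [Fintype X] (ω : X × X → ℝ) (μ ν : X → ℝ) : Prop :=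
  IsDist ω ∧ (∀ x, ∑ y, ω (x, y) = μ x) ∧ (∀ x, ∑ y, ω (y, x) = ν x)

/-- Total variation distance: the maximum pointwise difference. -/
noncomputable def dTV {X : Type*} [Fintype X] (μ ν : X → ℝ) : ℝ :=
  ⨆ x, |μ x - ν x|

/-- The support of a (sub)distribution: points of positive probability. -/
def psupp {X : Type*} (μ : X → ℝ) : Set X := {x | 0 < μ x}

/-- Distance between functions into distributions. -/
noncomputable def dF {A B : Type*} [Fintype B] (f g : A → B → ℝ) : ℝ :=
  ⨆ a, dTV (f a) (g a)

/-- `τ` is a transition probability function on `S`. -/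
def IsTransFn {S : Type*} [Fintype S] (τ : S → S → ℝ) : Prop := ∀ s, IsDist (τ s)

/-- The diagonal `S²_Δ`. -/
def SDelta (S : Type*) : Set (S × S) := {p | p.1 = p.2}

/-- `P` is a policy for `τ` (with labelling `ℓ`). -/
def IsPolicy {S L : Type*} [Fintype S] (ℓ : S → L) (τ : S → S → ℝ)
    (P : S × S → S × S → ℝ) : Prop :=
  (∀ p, IsDist (P p)) ∧
  (∀ p : S × S, ℓ p.1 = ℓ p.2 → IsCoupling (P p) (τ p.1) (τ p.2)) ∧
  (∀ p : S × S, ℓ p.1 ≠ ℓ p.2 → psupp (P p) = {p})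

/-- A policy is `S²_Δ`-closed if the support of `P (s,s)` lies in the diagonal. -/
def DeltaClosed {S : Type*} (P : S × S → S × S → ℝ) : Prop :=
  ∀ s : S, psupp (P (s, s)) ⊆ SDelta S

/-- `d` is a `[0,1]`-valued function. -/
def Is01 {A : Type*} (d : A → ℝ) : Prop := ∀ a, 0 ≤ d a ∧ d a ≤ 1

/-- `d` is the least fixed point of `F` on the complete lattice of `[0,1]`-valued functions. -/
def IsLfpOn {A : Type*} (F : (A → ℝ) → (A → ℝ)) (d : A → ℝ) : Prop :=
  Is01 d ∧ F d = d ∧ ∀ e, Is01 e → F e = e → ∀ a, d a ≤ e a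

/-- The map `Γ_P` whose least fixed point is `γ_P`. -/
noncomputable def GammaF {S L : Type*} [Fintype S] (ℓ : S → L)
    (P : S × S → S × S → ℝ) (d : S × S → ℝ) : S × S → ℝ :=
  fun p => if ℓ p.1 ≠ ℓ p.2 then 1 else ∑ q, P p q * d q

/-- The map `Δ_τ` whose least fixed point is the probabilistic bisimilarity distance `δ_τ`. -/
noncomputable def DeltaF {S L : Type*} [Fintype S] (ℓ : S → L)
    (τ : S → S → ℝ) (d : S × S → ℝ) : S × S → ℝ :=
  fun p => if ℓ p.1 ≠ ℓ p.2 then 1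
    else sInf {r | ∃ ω, IsCoupling ω (τ p.1) (τ p.2) ∧ r = ∑ q, ω q * d q}

/-- The map whose least fixed point is `ρ_P`, the probability of reaching `S²_Δ`. -/
noncomputable def ReachF {S : Type*} [Fintype S]
    (P : S × S → S × S → ℝ) (e : S × S → ℝ) : S × S → ℝ :=
  fun p => if p.1 = p.2 then 1 else ∑ q, P p q * e q

/-- States `s` and `t` are robustly probabilistically bisimilar. -/
def Robust {S L : Type*} [Fintype S] (ℓ : S → L) (τ : S → S → ℝ) (s t : S) : Prop :=
  ∃ P ρ, IsPolicy ℓ τ P ∧ IsLfpOn (ReachF P) ρ ∧ ρ (s, t) = 1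

/-- `R` is a probabilistic bisimulation. -/
def IsBisim {S L : Type*} [Fintype S] (ℓ : S → L) (τ : S → S → ℝ)
    (R : Set (S × S)) : Prop :=
  Equivalence (fun s t => (s, t) ∈ R) ∧
  ∀ p ∈ R, ℓ p.1 = ℓ p.2 ∧ ∃ ω, IsCoupling ω (τ p.1) (τ p.2) ∧ psupp ω ⊆ R

/-- Probabilistic bisimilarity `∼`. -/
def Bisimilar {S L : Type*} [Fintype S] (ℓ : S → L) (τ : S → S → ℝ) (s t : S) : Prop :=
  ∃ R, IsBisim ℓ τ R ∧ (s, t) ∈ R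

/-- A step of a path in `⟨S×S, P⟩` supported by `R`. -/
def SupStep {S : Type*} (P : S × S → S × S → ℝ) (R : Set (S × S)) (a b : S × S) : Prop :=
  a ∈ R ∧ psupp (P a) ⊆ R ∧ 0 < P a b

/-- `R` supports a path from `p` to `S²_Δ` in `⟨S×S, P⟩`. -/
def SupportsPathToDelta {S : Type*} (P : S × S → S × S → ℝ) (R : Set (S × S))
    (p : S × S) : Prop :=
  ∃ q : S × S, q.1 = q.2 ∧ Relation.ReflTransGen (SupStep P R) p q ∧
    q ∈ R ∧ psupp (P q) ⊆ R

/-- `R` is a robust bisimulation. -/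
def IsRobustBisim {S L : Type*} [Fintype S] (ℓ : S → L) (τ : S → S → ℝ)
    (R : Set (S × S)) : Prop :=
  IsBisim ℓ τ R ∧ ∀ p ∈ R, ∃ P, IsPolicy ℓ τ P ∧ SupportsPathToDelta P R p

/-- The function `Filter` from the algorithm. -/
def FilterFn {S L : Type*} [Fintype S] (ℓ : S → L) (τ : S → S → ℝ)
    (R : Set (S × S)) : Set (S × S) :=
  {p ∈ R | ∃ P, IsPolicy ℓ τ P ∧ SupportsPathToDelta P R p}

/-- The function `Prune` from the algorithm. -/
def PruneFn {S : Type*} (Q : Set (S × S)) : Set (S × S) :=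
  {p ∈ Q | ∀ u : S, ((p.2, u) ∈ Q → (p.1, u) ∈ Q) ∧ ((u, p.1) ∈ Q → (u, p.2) ∈ Q)}

/-- `B` is the greatest probabilistic bisimulation contained in `Q` (i.e. `B = Bisim(Q)`). -/
def IsGreatestBisimIn {S L : Type*} [Fintype S] (ℓ : S → L) (τ : S → S → ℝ)
    (Q B : Set (S × S)) : Prop :=
  IsBisim ℓ τ B ∧ B ⊆ Q ∧ ∀ B', IsBisim ℓ τ B' → B' ⊆ Q → B' ⊆ B

/-- Reachability in the Markov chain `⟨S×S, P⟩`. -/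
def Reach {S : Type*} (P : S × S → S × S → ℝ) (p q : S × S) : Prop :=
  Relation.ReflTransGen (fun a b => 0 < P a b) p q

/-- `C` is a communication class of `⟨S×S, P⟩`. -/
def IsCommClass {S : Type*} (P : S × S → S × S → ℝ) (C : Set (S × S)) : Prop :=
  ∃ p, C = {q | Reach P p q ∧ Reach P q p}

/-- `C` is closed: no transition of positive probability leaves `C`. -/
def IsClosedClass {S : Type*} (P : S × S → S × S → ℝ) (C : Set (S × S)) : Prop :=
  ∀ p ∈ C, psupp (P p) ⊆ C

/-!
The policies witnessing the individual paths are glued into a single policy: at every pair, play a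
policy that starts a shortest supported path to the diagonal, so that the distance to the diagonal
can always decrease. Under the glued policy no transition leaves `R` before the diagonal is hit,
and the diagonal stays reachable from all of `R`. The hitting probability `ρ` is harmonic off the
diagonal, so where it attains its minimum over `R` it also attains it at all successors; following
a path, the minimum is attained on the diagonal, where `ρ = 1`.
-/

section Reachability

variable {X ι : Type*}

/-- The points from which the target set `T` can be reached in exactly `n` steps of `r`. These
layers provide the distance to `T`. -/
def stepsTo (r : X → X → Prop) (T : Set X) : ℕ → Set X
  | 0 => T
  | n + 1 => {p | ∃ q ∈ stepsTo r T n, r p q}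

theorem exists_mem_stepsTo_iff {r : X → X → Prop} {T : Set X} {p : X} :
    (∃ n, p ∈ stepsTo r T n) ↔ ∃ t ∈ T, Relation.ReflTransGen r p t := by
  constructor
  · rintro ⟨n, hn⟩
    induction n generalizing p with
    | zero => exact ⟨p, hn, .refl⟩
    | succ n ih =>
      obtain ⟨q, hq, hpq⟩ := hn
      obtain ⟨t, ht, hqt⟩ := ih hq
      exact ⟨t, ht, .head hpq hqt⟩
  · rintro ⟨t, ht, hpt⟩
    induction hpt using Relation.ReflTransGen.head_induction_on with
    | refl => exact ⟨0, ht⟩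
    | head hab _ ih =>
      obtain ⟨n, hn⟩ := ih
      exact ⟨n + 1, _, hn, hab⟩

theorem exists_rank_of_reflTransGen (r : X → X → Prop) (T : Set X) :
    ∃ rank : X → ℕ, ∀ p ∉ T, (∃ t ∈ T, Relation.ReflTransGen r p t) →
      ∃ q, r p q ∧ (∃ t ∈ T, Relation.ReflTransGen r q t) ∧ rank q < rank p := by
  refine ⟨fun p => sInf {n | p ∈ stepsTo r T n}, fun p hpT hp => ?_⟩
  have hmem : p ∈ stepsTo r T (sInf {n | p ∈ stepsTo r T n}) :=
    Nat.sInf_mem (exists_mem_stepsTo_iff.2 hp)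
  rcases hrank : sInf {n | p ∈ stepsTo r T n} with _ | n
  · rw [hrank] at hmem
    exact absurd hmem hpT
  · rw [hrank] at hmem
    obtain ⟨q, hq, hpq⟩ := hmem
    have hlt : sInf {k | q ∈ stepsTo r T k} < n + 1 := Nat.lt_succ_of_le (Nat.sInf_le hq)
    exact ⟨q, hpq, exists_mem_stepsTo_iff.1 ⟨n, hq⟩, hlt.trans_eq hrank.symm⟩

theorem exists_choice_forall_reflTransGen [Nonempty ι] (r : ι → X → X → Prop) (T : Set X) :
    ∃ f : X → ι, ∀ p, (∃ t ∈ T, Relation.ReflTransGen (fun a b => ∃ i, r i a b) p t) →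
      ∃ t ∈ T, Relation.ReflTransGen (fun a b => r (f a) a b) p t := by
  obtain ⟨rank, hrank⟩ := exists_rank_of_reflTransGen (fun a b => ∃ i, r i a b) T
  have hdescent : ∀ p, ∃ i, p ∉ T →
      (∃ t ∈ T, Relation.ReflTransGen (fun a b => ∃ i, r i a b) p t) →
      ∃ q, r i p q ∧ (∃ t ∈ T, Relation.ReflTransGen (fun a b => ∃ i, r i a b) q t) ∧
        rank q < rank p := by
    intro p
    by_cases hp : p ∉ T ∧ ∃ t ∈ T, Relation.ReflTransGen (fun a b => ∃ i, r i a b) p t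
    · obtain ⟨q, ⟨i, hi⟩, hq⟩ := hrank p hp.1 hp.2
      exact ⟨i, fun _ _ => ⟨q, hi, hq⟩⟩
    · exact ⟨Classical.arbitrary ι, fun hpT hpt => absurd ⟨hpT, hpt⟩ hp⟩
  choose f hf using hdescent
  refine ⟨f, fun p => ?_⟩
  induction p using (measure rank).wf.induction with
  | h p ih =>
    intro hp
    by_cases hpT : p ∈ T
    · exact ⟨p, hpT, .refl⟩
    · obtain ⟨q, hpq, hq, hlt⟩ := hf p hpT hp
      obtain ⟨t, ht, hqt⟩ := ih q hlt hq
      exact ⟨t, ht, .head hpq hqt⟩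

end Reachability

section MinimumPrinciple

variable {X : Type*} [Fintype X]

theorem IsDist.eq_of_sum_mul_le {μ e : X → ℝ} {m : ℝ} (hμ : IsDist μ)
    (hle : ∀ x ∈ psupp μ, m ≤ e x) (hsum : ∑ x, μ x * e x ≤ m) {x : X} (hx : x ∈ psupp μ) :
    e x = m := by
  have hterm : ∀ y, μ y * m ≤ μ y * e y := fun y => by
    rcases (hμ.1 y).eq_or_lt with hy | hy
    · simp only [← hy, zero_mul, le_refl]
    · exact mul_le_mul_of_nonneg_left (hle y hy) hy.le
  by_contra hne
  have hlt : ∑ y, μ y * m < ∑ y, μ y * e y :=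
    Finset.sum_lt_sum (fun y _ => hterm y)
      ⟨x, Finset.mem_univ x, mul_lt_mul_of_pos_left ((hle x hx).lt_of_ne' hne) hx⟩
  rw [← Finset.sum_mul, hμ.2, one_mul] at hlt
  exact hlt.not_ge hsum

theorem le_of_superharmonic_of_reflTransGen {P : X → X → ℝ} {R T : Set X} {e : X → ℝ} {c : ℝ}
    (hdist : ∀ p ∈ R \ T, IsDist (P p)) (hclosed : ∀ p ∈ R \ T, psupp (P p) ⊆ R)
    (hreach : ∀ p ∈ R, ∃ t ∈ T, Relation.ReflTransGen (fun a b => 0 < P a b) p t)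
    (hsuper : ∀ p ∈ R \ T, ∑ q, P p q * e q ≤ e p) (htarget : ∀ t ∈ T, c ≤ e t) :
    ∀ p ∈ R, c ≤ e p := by
  have hminimizer : ∀ p ∈ R, (∀ q ∈ R, e p ≤ e q) → c ≤ e p := by
    intro p hp hmin
    obtain ⟨t, ht, hpt⟩ := hreach p hp
    induction hpt using Relation.ReflTransGen.head_induction_on with
    | refl => exact htarget t ht
    | @head a b hab _ ih =>
      by_cases haT : a ∈ T
      · exact htarget a haT
      · have ha : a ∈ R \ T := ⟨hp, haT⟩
        have hba : e b = e a :=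
          (hdist a ha).eq_of_sum_mul_le (fun q hq => hmin q (hclosed a ha hq)) (hsuper a ha) hab
        rw [← hba] at hmin ⊢
        exact ih (hclosed a ha hab) hmin
  intro p hp
  obtain ⟨m, hm, hmin⟩ := R.toFinite.exists_minimalFor e R ⟨p, hp⟩
  have hmin' : ∀ q ∈ R, e m ≤ e q := fun q hq => (le_total (e m) (e q)).elim id (hmin hq)
  exact (hminimizer m hm hmin').trans (hmin' p hp)

end MinimumPrinciple

section LeastFixedPoint

theorem exists_isLfpOn {A : Type*} {F : (A → ℝ) → A → ℝ} (hF : ∀ e, Is01 e → Is01 (F e))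
    (hmono : ∀ d e, Is01 d → Is01 e → d ≤ e → F d ≤ F e) : ∃ d, IsLfpOn F d := by
  have : Fact ((0 : ℝ) ≤ 1) := ⟨zero_le_one⟩
  let G : (A → Set.Icc (0 : ℝ) 1) →o (A → Set.Icc (0 : ℝ) 1) :=
    { toFun := fun e a => ⟨F (fun b => e b) a, hF _ (fun b => (e b).2) a⟩
      monotone' := fun d e hde => hmono _ _ (fun b => (d b).2) (fun b => (e b).2) hde }
  refine ⟨fun a => G.lfp a, fun a => (G.lfp a).2, ?_, fun e he hfix => ?_⟩
  · exact funext fun a => congrArg Subtype.val (congrFun G.map_lfp a)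
  · exact G.lfp_le_fixed (a := fun a => ⟨e a, he a⟩)
      (funext fun a => Subtype.ext (congrFun hfix a))

variable {S : Type*} [Fintype S] {P : S × S → S × S → ℝ}

theorem Is01.reachF (hP : ∀ p, IsDist (P p)) {e : S × S → ℝ} (he : Is01 e) :
    Is01 (ReachF P e) := by
  intro p
  unfold ReachF
  split_ifs
  · exact ⟨zero_le_one, le_rfl⟩
  · refine ⟨Finset.sum_nonneg fun q _ => mul_nonneg ((hP p).1 q) (he q).1, ?_⟩
    rw [← (hP p).2]
    exact Finset.sum_le_sum fun q _ => mul_le_of_le_one_right ((hP p).1 q) (he q).2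

theorem reachF_mono (hP : ∀ p q, 0 ≤ P p q) : Monotone (ReachF P) := by
  intro d e hde p
  unfold ReachF
  split_ifs
  · exact le_rfl
  · exact Finset.sum_le_sum fun q _ => mul_le_mul_of_nonneg_left (hde q) (hP p q)

theorem exists_isLfpOn_reachF (hP : ∀ p, IsDist (P p)) : ∃ ρ, IsLfpOn (ReachF P) ρ :=
  exists_isLfpOn (fun _ => Is01.reachF hP) fun _ _ _ _ hde => reachF_mono (fun p => (hP p).1) hde

end LeastFixedPoint

theorem psupp_single {X : Type*} (x : X) : psupp (Pi.single x (1 : ℝ)) = {x} := by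
  ext y
  by_cases hy : y = x <;> simp [psupp, hy]

section Distributions

variable {X : Type*} [Fintype X]

theorem IsDist.isCoupling_mul {μ ν : X → ℝ} (hμ : IsDist μ) (hν : IsDist ν) :
    IsCoupling (fun q => μ q.1 * ν q.2) μ ν := by
  refine ⟨⟨fun q => mul_nonneg (hμ.1 _) (hν.1 _), ?_⟩, fun x => ?_, fun x => ?_⟩
  · simp only [Fintype.sum_prod_type, ← Finset.mul_sum, hν.2, mul_one, hμ.2]
  · simp only [← Finset.mul_sum, hν.2, mul_one]
  · simp only [← Finset.sum_mul, hμ.2, one_mul]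

theorem isDist_single (x : X) : IsDist (Pi.single x (1 : ℝ)) := by
  refine ⟨fun y => ?_, Fintype.sum_pi_single' x 1⟩
  exact (Pi.single_nonneg.2 zero_le_one : (0 : X → ℝ) ≤ Pi.single x 1) y

end Distributions

theorem psupp_subset_of_reflTransGen_supStep {S : Type*} {P : S × S → S × S → ℝ}
    {R : Set (S × S)} {p q : S × S} (hpq : Relation.ReflTransGen (SupStep P R) p q) (hne : p ≠ q) :
    psupp (P p) ⊆ R := by
  obtain rfl | ⟨_, hstep, -⟩ := hpq.cases_head
  · exact absurd rfl hne
  · exact hstep.2.1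

section Policy

variable {S L : Type*} [Fintype S] {ℓ : S → L} {τ : S → S → ℝ}

theorem exists_isPolicy (ℓ : S → L) (hτ : IsTransFn τ) : ∃ P, IsPolicy ℓ τ P := by
  have hlocal : ∀ p : S × S, ∃ ω : S × S → ℝ, IsDist ω ∧
      (ℓ p.1 = ℓ p.2 → IsCoupling ω (τ p.1) (τ p.2)) ∧
      (ℓ p.1 ≠ ℓ p.2 → psupp ω = {p}) := by
    intro p
    by_cases hp : ℓ p.1 = ℓ p.2
    · have hω := (hτ p.1).isCoupling_mul (hτ p.2)
      exact ⟨_, hω.1, fun _ => hω, absurd hp⟩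
    · exact ⟨_, isDist_single p, fun h => absurd h hp, fun _ => psupp_single p⟩
  choose P hdist hcoupling hstay using hlocal
  exact ⟨P, hdist, hcoupling, hstay⟩

theorem IsPolicy.glue {Q : S × S → S × S → S × S → ℝ} (hQ : ∀ p, IsPolicy ℓ τ (Q p)) :
    IsPolicy ℓ τ (fun p => Q p p) :=
  ⟨fun p => (hQ p).1 p, fun p => (hQ p).2.1 p, fun p => (hQ p).2.2 p⟩

theorem exists_isPolicy_forall_reflTransGen_supStep (hτ : IsTransFn τ) {R : Set (S × S)}
    (hR : ∀ p ∈ R, ∃ P, IsPolicy ℓ τ P ∧ SupportsPathToDelta P R p) :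
    ∃ P, IsPolicy ℓ τ P ∧
      ∀ p ∈ R, ∃ q ∈ SDelta S, Relation.ReflTransGen (SupStep P R) p q := by
  have : Nonempty {P // IsPolicy ℓ τ P} := nonempty_subtype.2 (exists_isPolicy ℓ hτ)
  obtain ⟨f, hf⟩ := exists_choice_forall_reflTransGen
    (fun P : {P // IsPolicy ℓ τ P} => SupStep P.1 R) (SDelta S)
  refine ⟨fun p => (f p).1 p, IsPolicy.glue fun p => (f p).2, fun p hp => hf p ?_⟩
  obtain ⟨P, hP, q, hq, hpq, -⟩ := hR p hp
  exact ⟨q, hq, Relation.ReflTransGen.mono (fun _ _ hab => ⟨⟨P, hP⟩, hab⟩) _ _ hpq⟩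

theorem eq_one_of_reflTransGen_supStep {P : S × S → S × S → ℝ} (hP : ∀ p, IsDist (P p))
    {R : Set (S × S)} (hR : ∀ p ∈ R, ∃ q ∈ SDelta S, Relation.ReflTransGen (SupStep P R) p q)
    {e : S × S → ℝ} (he : Is01 e) (hfix : ReachF P e = e) {p : S × S} (hp : p ∈ R) :
    e p = 1 := by
  refine le_antisymm (he p).2 (le_of_superharmonic_of_reflTransGen (T := SDelta S)
    (fun a _ => hP a) (fun a ha => ?closed) (fun a ha => ?reach) (fun a ha => ?superharmonic)
    (fun t ht => ?target) p hp)
  case closed =>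
    obtain ⟨q, hq, haq⟩ := hR a ha.1
    exact psupp_subset_of_reflTransGen_supStep haq fun h => ha.2 (h ▸ hq)
  case reach =>
    obtain ⟨q, hq, haq⟩ := hR a ha
    exact ⟨q, hq, Relation.ReflTransGen.mono (fun _ _ hstep => hstep.2.2) _ _ haq⟩
  case superharmonic => exact ((if_neg ha.2).symm.trans (congrFun hfix a)).le
  case target => exact ((if_pos ht).symm.trans (congrFun hfix t)).le

end Policy

theorem robust_bisimulation_subset_robust_general {S L : Type*} [Fintype S] (ℓ : S → L)
    (τ : S → S → ℝ) (hτ : IsTransFn τ) (R : Set (S × S))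
    (hR : ∀ p ∈ R, ∃ P, IsPolicy ℓ τ P ∧ SupportsPathToDelta P R p) :
    R ⊆ {p : S × S | Robust ℓ τ p.1 p.2} := by
  intro p hp
  obtain ⟨P, hP, hpath⟩ := exists_isPolicy_forall_reflTransGen_supStep hτ hR
  obtain ⟨ρ, hρ⟩ := exists_isLfpOn_reachF hP.1
  exact ⟨P, ρ, hP, hρ, eq_one_of_reflTransGen_supStep hP.1 hpath hρ.1 hρ.2.1 hp⟩

/-- Proposition 10: every robust bisimulation is contained in robust probabilistic
bisimilarity `≃`. -/
theorem robust_bisimulation_subset_robust {S L : Type*} [Fintype S] [Nonempty S] [Fintype L]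
    (ℓ : S → L) (hℓ : ∃ a b : S, ℓ a ≠ ℓ b)
    (τ : S → S → ℝ) (hτ : IsTransFn τ)
    (R : Set (S × S)) (hR : IsRobustBisim ℓ τ R) :
    R ⊆ {p : S × S | Robust ℓ τ p.1 p.2} :=
  robust_bisimulation_subset_robust_general ℓ τ hτ R hR.2
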